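/- For every n ≥ 3 and every integer k (with the convention D_{m,j}^* = 0 for j < 0): D_{n,k}^1 = (2k-1)·D_{n-1,k}^1 + 2(n-k)·D_{n-1,k-1}^1 + D_{n-1,k}^{0,1} + D_{n-1,k-1}^{≥2} + D_{n-1,k}^{0,≥2}. -/

import Mathlib

/-- A signed permutation of `{1,…,n}`, encoded as an (unsigned) permutation of
`Fin n` together with a choice of sign for each position.  The associated
word is `π_1 π_2 ⋯ π_n` where `π_j = ± σ(j)`. -/
abbrev SignedPerm (n : ℕ) := Equiv.Perm (Fin n) × (Fin n → Bool)

namespace SignedPerm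

/-- The letter `π_j` of the word of `p`, for `1 ≤ j ≤ n` (and `0` otherwise). -/
def word {n : ℕ} (p : SignedPerm n) (j : ℕ) : ℤ :=
  if h : 1 ≤ j ∧ j ≤ n then
    (if p.2 ⟨j - 1, by omega⟩ then -1 else 1) * ((p.1 ⟨j - 1, by omega⟩ : ℕ) + 1)
  else 0

/-- The letter `π_j`, with the type `D` convention `π_0 = -π_2`. -/
def entry {n : ℕ} (p : SignedPerm n) (j : ℕ) : ℤ :=
  if j = 0 then -(p.word 2) else p.word j

/-- The set of `D`-descents of `p`: those `i ∈ {0,…,n-1}` with `π_i > π_{i+1}`. -/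
def ddes {n : ℕ} (p : SignedPerm n) : Finset ℕ :=
  (Finset.range n).filter fun i => p.entry (i + 1) < p.entry i

/-- The number of `D`-descents of `p`. -/
def d {n : ℕ} (p : SignedPerm n) : ℕ := p.ddes.card

/-- Membership in the type `D` Coxeter group `D_n ⊆ B_n`:
the number of negative letters is even. -/
def inD {n : ℕ} (p : SignedPerm n) : Prop :=
  Even (Finset.univ.filter (fun i => p.2 i = true)).card

/-- Type '1': descent at position `1` but not at `0`. -/
def type1 {n : ℕ} (p : SignedPerm n) : Prop := 1 ∈ p.ddes ∧ 0 ∉ p.ddes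

/-- Type '0,1': descents at both positions `0` and `1`. -/
def type01 {n : ℕ} (p : SignedPerm n) : Prop := 0 ∈ p.ddes ∧ 1 ∈ p.ddes

/-- Type '≥2': no descent at positions `0` and `1`. -/
def typeGe2 {n : ℕ} (p : SignedPerm n) : Prop := 0 ∉ p.ddes ∧ 1 ∉ p.ddes

/-- Type '0,≥2': descent at position `0` but not at `1`. -/
def type0Ge2 {n : ℕ} (p : SignedPerm n) : Prop := 0 ∈ p.ddes ∧ 1 ∉ p.ddes

instance {n : ℕ} (p : SignedPerm n) : Decidable p.inD := by
  unfold SignedPerm.inD; infer_instance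
instance {n : ℕ} (p : SignedPerm n) : Decidable p.type1 := by
  unfold SignedPerm.type1; infer_instance
instance {n : ℕ} (p : SignedPerm n) : Decidable p.type01 := by
  unfold SignedPerm.type01; infer_instance
instance {n : ℕ} (p : SignedPerm n) : Decidable p.typeGe2 := by
  unfold SignedPerm.typeGe2; infer_instance
instance {n : ℕ} (p : SignedPerm n) : Decidable p.type0Ge2 := by
  unfold SignedPerm.type0Ge2; infer_instance

end SignedPerm

/-- The type `D` Eulerian number `D_{n,k}`: the number of elements of `D_n`
with exactly `k` `D`-descents (zero for `k < 0`). -/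
def eulerD (n : ℕ) (k : ℤ) : ℕ :=
  (Finset.univ.filter fun p : SignedPerm n => p.inD ∧ (p.d : ℤ) = k).card

/-- The sub-Eulerian number `D_{n,k}^1`. -/
def subEuler1 (n : ℕ) (k : ℤ) : ℕ :=
  (Finset.univ.filter fun p : SignedPerm n => p.inD ∧ p.type1 ∧ (p.d : ℤ) = k).card

/-- The sub-Eulerian number `D_{n,k}^{0,1}`. -/
def subEuler01 (n : ℕ) (k : ℤ) : ℕ :=
  (Finset.univ.filter fun p : SignedPerm n => p.inD ∧ p.type01 ∧ (p.d : ℤ) = k).card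

/-- The sub-Eulerian number `D_{n,k}^{≥2}`. -/
def subEulerGe2 (n : ℕ) (k : ℤ) : ℕ :=
  (Finset.univ.filter fun p : SignedPerm n => p.inD ∧ p.typeGe2 ∧ (p.d : ℤ) = k).card

/-- The sub-Eulerian number `D_{n,k}^{0,≥2}`. -/
def subEuler0Ge2 (n : ℕ) (k : ℤ) : ℕ :=
  (Finset.univ.filter fun p : SignedPerm n => p.inD ∧ p.type0Ge2 ∧ (p.d : ℤ) = k).card

/-- The type `D` Eulerian polynomial `D_n(t) = Σ_{π ∈ D_n} t^{d(π)}`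
(with `D_0(t) = D_1(t) = 1`). -/
noncomputable def polyD (n : ℕ) : Polynomial ℚ :=
  ∑ p ∈ Finset.univ.filter (fun p : SignedPerm n => p.inD), Polynomial.X ^ p.d

/-- The sub-Eulerian polynomial `D_n^1(t)`. -/
noncomputable def polyD1 (n : ℕ) : Polynomial ℚ :=
  ∑ p ∈ Finset.univ.filter (fun p : SignedPerm n => p.inD ∧ p.type1), Polynomial.X ^ p.d

/-- The sub-Eulerian polynomial `D_n^{0,1}(t)`. -/
noncomputable def polyD01 (n : ℕ) : Polynomial ℚ :=
  ∑ p ∈ Finset.univ.filter (fun p : SignedPerm n => p.inD ∧ p.type01), Polynomial.X ^ p.d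

/-- The sub-Eulerian polynomial `D_n^{≥2}(t)`. -/
noncomputable def polyDGe2 (n : ℕ) : Polynomial ℚ :=
  ∑ p ∈ Finset.univ.filter (fun p : SignedPerm n => p.inD ∧ p.typeGe2), Polynomial.X ^ p.d

/-- The sub-Eulerian polynomial `D_n^{0,≥2}(t)`. -/
noncomputable def polyD0Ge2 (n : ℕ) : Polynomial ℚ :=
  ∑ p ∈ Finset.univ.filter (fun p : SignedPerm n => p.inD ∧ p.type0Ge2), Polynomial.X ^ p.d

/-!
Forgetting the parity condition costs only a factor of two: changing the sign of the letter `±1`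
leaves every `D`-descent in place, because the neighbours it is compared with have absolute value
at least `2`, and it exchanges `D_n` with its complement. So it suffices to prove the recurrence
for all signed permutations.

There, every `p` arises from a unique shorter `q` by inserting the letter `±n` after the first `i`
letters. The new letter is an extreme value, so for `i ≠ 1` the descent `i` of `q`, if present, is
lost, exactly one of `i` and `i + 1` becomes a descent (only `i` can when the letter is put at the
end), and later descents are shifted. For `i ≥ 2` the type is unchanged, for `i = 0` the result has
type `1` exactly when the letter is positive, and for `i = 1` it never does, because `0` and `1`
are then both descents or both not. If `q` has type `1` and `d` descents, the positions
`2 ≤ i < n - 1` therefore yield `2(d - 1)` permutations of type `1` with `d` descents and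
`2(n - 2 - d)` with `d + 1`; the two ends yield one more with `d` and two more with `d + 1`, which
explains the leading coefficients. The other types contribute through `i = 0` only.
-/

open Finset

lemma even_card_filter_update_not {ι : Type*} [Fintype ι] [DecidableEq ι] (f : ι → Bool) (a : ι) :
    Even #{i | Function.update f a (!f a) i = true} ↔ ¬ Even #{i | f i = true} := by
  cases ha : f a
  · have : univ.filter (Function.update f a true · = true) = insert a (univ.filter (f ·)) := by
      ext i; by_cases hi : i = a <;> simp [hi]
    rw [Bool.not_false, this, card_insert_of_notMem (by simp [ha]), Nat.even_add_one]
  · have : univ.filter (f ·) = insert a (univ.filter (Function.update f a false ·)) := by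
      ext i; by_cases hi : i = a <;> simp [hi, ha]
    rw [Bool.not_true, this, card_insert_of_notMem (by simp), Nat.even_add_one, not_not]

lemma card_eq_card_erase_add_card_inter {A B : Finset ℕ} {i : ℕ}
    (hlt : ∀ j < i, (j ∈ B ↔ j ∈ A)) (hgt : ∀ j, i < j → (j + 1 ∈ B ↔ j ∈ A)) :
    #B = #(A.erase i) + #(B ∩ {i, i + 1}) := by
  let skip : ℕ → ℕ := fun j ↦ if j < i then j else j + 1
  have skip_injective : Function.Injective skip := fun a b h ↦ by grind
  have sdiff_eq : B \ {i, i + 1} = (A.erase i).image skip := by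
    ext j
    simp only [mem_sdiff, mem_insert, mem_singleton, mem_image, mem_erase, skip]
    constructor
    · rintro ⟨hj, hji⟩
      rcases lt_or_ge j i with h | h
      · exact ⟨j, by grind⟩
      · exact ⟨j - 1, by grind⟩
    · grind
  rw [← card_image_of_injective (A.erase i) skip_injective, ← sdiff_eq, card_sdiff_add_card_inter]

namespace SignedPerm

section Letters

variable {n : ℕ} (p : SignedPerm n)

lemma word_succ (i : Fin n) : p.word (i + 1) = (if p.2 i then -1 else 1) * ((p.1 i : ℕ) + 1) := by
  simp [word]

lemma word_eq_zero {j : ℕ} (hj : ¬ (1 ≤ j ∧ j ≤ n)) : p.word j = 0 := dif_neg hj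

lemma abs_word_succ (i : Fin n) : |p.word (i + 1)| = (p.1 i : ℕ) + 1 := by
  rw [word_succ, abs_mul, abs_of_nonneg (by positivity : (0 : ℤ) ≤ (p.1 i : ℕ) + 1)]
  split_ifs <;> simp

lemma abs_word_le (j : ℕ) : |p.word j| ≤ n := by
  by_cases hj : 1 ≤ j ∧ j ≤ n
  · obtain ⟨i, rfl⟩ : ∃ i : Fin n, j = i + 1 := ⟨⟨j - 1, by omega⟩, by simp; omega⟩
    rw [abs_word_succ]
    have := (p.1 i).isLt
    omega
  · simp [word_eq_zero p hj]

@[simp] lemma entry_zero : p.entry 0 = -p.word 2 := rfl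

@[simp] lemma entry_succ (j : ℕ) : p.entry (j + 1) = p.word (j + 1) := rfl

lemma mem_ddes {j : ℕ} : j ∈ p.ddes ↔ j < n ∧ p.entry (j + 1) < p.entry j := by
  simp only [ddes, mem_filter, mem_range]

lemma d_eq_sum : (p.d : ℤ) = ∑ j : Fin n, if (j : ℕ) ∈ p.ddes then 1 else 0 := by
  have ddes_subset : p.ddes ⊆ range n := filter_subset _ _
  rw [Fin.sum_univ_eq_sum_range (fun j ↦ if j ∈ p.ddes then (1 : ℤ) else 0), sum_boole,
    filter_mem_eq_inter, inter_eq_right.2 ddes_subset, d]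

lemma card_erase_ddes_add (j : ℕ) : #(p.ddes.erase j) + (if j ∈ p.ddes then 1 else 0) = p.d := by
  split_ifs with hj
  · exact card_erase_add_one hj
  · rw [erase_eq_of_notMem hj, add_zero, d]

end Letters

section FlipOne

variable {n : ℕ}

/-- The signed permutation obtained from `p` by changing the sign of the letter `±1`, the
involution that compares `D_n` with its complement. -/
def flipOne (p : SignedPerm (n + 1)) : SignedPerm (n + 1) :=
  (p.1, Function.update p.2 (p.1.symm 0) (!p.2 (p.1.symm 0)))

lemma flipOne_involutive : Function.Involutive (flipOne (n := n)) := fun p ↦ by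
  simp [flipOne]

lemma inD_flipOne (p : SignedPerm (n + 1)) : p.flipOne.inD ↔ ¬ p.inD :=
  even_card_filter_update_not p.2 (p.1.symm 0)

lemma word_flipOne (p : SignedPerm (n + 1)) (j : ℕ) :
    p.flipOne.word j = if |p.word j| = 1 then -p.word j else p.word j := by
  by_cases hj : 1 ≤ j ∧ j ≤ n + 1
  · obtain ⟨i, rfl⟩ : ∃ i : Fin (n + 1), j = i + 1 := ⟨⟨j - 1, by omega⟩, by simp; omega⟩
    have abs_eq_one : |p.word (i + 1)| = 1 ↔ i = p.1.symm 0 := by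
      rw [abs_word_succ, Equiv.eq_symm_apply, Fin.ext_iff, Fin.val_zero]
      omega
    simp only [abs_eq_one]
    simp only [word_succ, flipOne]
    split_ifs <;> simp_all
  · simp [word_eq_zero _ hj]

lemma entry_flipOne (p : SignedPerm (n + 1)) (j : ℕ) :
    p.flipOne.entry j = if |p.entry j| = 1 then -p.entry j else p.entry j := by
  cases j
  · simp only [entry_zero, word_flipOne, abs_neg]
    split_ifs <;> rfl
  · exact word_flipOne p _

lemma abs_entry_pos (p : SignedPerm (n + 2)) {j : ℕ} (hj : j ≤ n + 2) : 0 < |p.entry j| := by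
  rcases j with _ | j
  · have abs_word_two : |p.word 2| = (p.1 1 : ℕ) + 1 := p.abs_word_succ 1
    rw [entry_zero, abs_neg, abs_word_two]
    positivity
  · rw [entry_succ, abs_word_succ p ⟨j, by omega⟩]
    positivity

lemma abs_entry_succ_ne (p : SignedPerm (n + 2)) {j : ℕ} (hj : j < n + 2) :
    |p.entry (j + 1)| ≠ |p.entry j| := by
  have abs_word_ne {a b : Fin (n + 2)} (hab : a ≠ b) : |p.word (a + 1)| ≠ |p.word (b + 1)| := by
    rw [abs_word_succ, abs_word_succ]
    have := Fin.val_ne_of_ne (p.1.injective.ne hab)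
    omega
  rcases j with _ | j
  · simpa using abs_word_ne (zero_ne_one (α := Fin (n + 2)))
  · exact abs_word_ne (a := ⟨j + 1, hj⟩) (b := ⟨j, by omega⟩) (by simp)

lemma ddes_flipOne (p : SignedPerm (n + 2)) : p.flipOne.ddes = p.ddes := by
  ext j
  simp only [mem_ddes, entry_flipOne]
  refine and_congr_right fun hj ↦ ?_
  have abs_ne := p.abs_entry_succ_ne hj
  have pos := p.abs_entry_pos hj.le
  have pos_succ := p.abs_entry_pos (Nat.succ_le_of_lt hj)
  grind

lemma two_mul_card_inD (P : SignedPerm (n + 1) → Prop) [DecidablePred P]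
    (hP : ∀ p, P p.flipOne ↔ P p) :
    2 * (#{p | p.inD ∧ P p} : ℤ) = ∑ p, if P p then 1 else 0 := by
  have card_not_inD : #{p | ¬ p.inD ∧ P p} = #{p | p.inD ∧ P p} :=
    card_nbij' flipOne flipOne (by simp [Set.MapsTo, inD_flipOne, hP])
      (by simp [Set.MapsTo, inD_flipOne, hP]) (fun p _ ↦ flipOne_involutive p)
      (fun p _ ↦ flipOne_involutive p)
  have card_split := card_filter_add_card_filter_not (s := {p | P p}) (inD (n := n + 1))
  simp only [filter_filter, and_comm (a := P _), card_not_inD] at card_split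
  rw [sum_boole, ← card_split]
  push_cast
  ring

lemma two_mul_subEuler1 (k : ℤ) : 2 * (subEuler1 (n + 2) k : ℤ) =
    ∑ p : SignedPerm (n + 2), if p.type1 ∧ (p.d : ℤ) = k then 1 else 0 :=
  two_mul_card_inD _ fun p ↦ by simp only [type1, d, ddes_flipOne]

lemma two_mul_subEuler01 (k : ℤ) : 2 * (subEuler01 (n + 2) k : ℤ) =
    ∑ p : SignedPerm (n + 2), if p.type01 ∧ (p.d : ℤ) = k then 1 else 0 :=
  two_mul_card_inD _ fun p ↦ by simp only [type01, d, ddes_flipOne]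

lemma two_mul_subEulerGe2 (k : ℤ) : 2 * (subEulerGe2 (n + 2) k : ℤ) =
    ∑ p : SignedPerm (n + 2), if p.typeGe2 ∧ (p.d : ℤ) = k then 1 else 0 :=
  two_mul_card_inD _ fun p ↦ by simp only [typeGe2, d, ddes_flipOne]

lemma two_mul_subEuler0Ge2 (k : ℤ) : 2 * (subEuler0Ge2 (n + 2) k : ℤ) =
    ∑ p : SignedPerm (n + 2), if p.type0Ge2 ∧ (p.d : ℤ) = k then 1 else 0 :=
  two_mul_card_inD _ fun p ↦ by simp only [type0Ge2, d, ddes_flipOne]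

end FlipOne

section InsertMax

variable {n : ℕ} (i : Fin (n + 1)) (s : Bool) (q : SignedPerm n)

/-- The signed permutation of `{1,…,n+1}` whose word is that of `q` with the letter `±(n+1)`
inserted after the first `i` letters; the letter is negative when `s` is `true`. -/
def insertMax : SignedPerm (n + 1) :=
  ((finSuccEquiv' i).trans (q.1.optionCongr.trans (finSuccEquiv' (Fin.last n)).symm),
    i.insertNth s q.2)

lemma insertMax_fst_self : (insertMax i s q).1 i = Fin.last n := by simp [insertMax]

lemma insertMax_snd_self : (insertMax i s q).2 i = s := by simp [insertMax]

lemma insertMax_fst_succAbove (j : Fin n) :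
    (insertMax i s q).1 (i.succAbove j) = (q.1 j).castSucc := by simp [insertMax]

lemma insertMax_snd_succAbove (j : Fin n) : (insertMax i s q).2 (i.succAbove j) = q.2 j := by
  simp [insertMax]

lemma insertMax_bijective : Function.Bijective
    fun x : SignedPerm n × Fin (n + 1) × Bool ↦ insertMax x.2.1 x.2.2 x.1 := by
  rw [Fintype.bijective_iff_injective_and_card]
  constructor
  · rintro ⟨q, i, s⟩ ⟨q', i', s'⟩ (h : insertMax i s q = insertMax i' s' q')
    obtain rfl : i = i' := (insertMax i s q).1.injective <| by
      rw [insertMax_fst_self, h, insertMax_fst_self]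
    obtain rfl : s = s' := by rw [← insertMax_snd_self i s q, h, insertMax_snd_self]
    obtain rfl : q = q' := by
      refine Prod.ext (Equiv.ext fun j ↦ Fin.castSucc_injective n ?_) (funext fun j ↦ ?_)
      · rw [← insertMax_fst_succAbove i s q, h, insertMax_fst_succAbove]
      · rw [← insertMax_snd_succAbove i s q, h, insertMax_snd_succAbove]
    rfl
  · simp only [Fintype.card_prod, Fintype.card_perm, Fintype.card_fun, Fintype.card_fin,
      Fintype.card_bool, Nat.factorial_succ, pow_succ]
    ring

lemma sum_insertMax {M : Type*} [AddCommMonoid M] (f : SignedPerm (n + 1) → M) :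
    ∑ q : SignedPerm n, ∑ i, ∑ s, f (insertMax i s q) = ∑ p, f p := by
  simp only [← insertMax_bijective.sum_comp f, Fintype.sum_prod_type (α₁ := SignedPerm n),
    Fintype.sum_prod_type (α₁ := Fin (n + 1))]

lemma word_insertMax_of_le {j : ℕ} (hj : j ≤ i) : (insertMax i s q).word j = q.word j := by
  rcases j with _ | j
  · simp [word]
  have hjn : j < n := by omega
  have succAbove_eq : (i.succAbove ⟨j, hjn⟩ : ℕ) = j := by
    rw [Fin.succAbove_of_castSucc_lt _ _ (by simpa [Fin.lt_def] using hj), Fin.val_castSucc]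
  have := word_succ (insertMax i s q) (i.succAbove ⟨j, hjn⟩)
  rw [succAbove_eq, insertMax_fst_succAbove, insertMax_snd_succAbove] at this
  exact this.trans (word_succ q ⟨j, hjn⟩).symm

lemma word_insertMax_succ_self :
    (insertMax i s q).word (i + 1) = (if s then -1 else 1) * (n + 1) := by
  rw [word_succ, insertMax_fst_self, insertMax_snd_self, Fin.val_last]

lemma word_insertMax_succ_of_lt {j : ℕ} (hj : i < j) :
    (insertMax i s q).word (j + 1) = q.word j := by
  obtain ⟨j, rfl⟩ : ∃ a, j = a + 1 := ⟨j - 1, by omega⟩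
  by_cases hjn : j < n
  · have succAbove_eq : (i.succAbove ⟨j, hjn⟩ : ℕ) = j + 1 := by
      rw [Fin.succAbove_of_le_castSucc _ _ (by simp [Fin.le_def]; omega), Fin.val_succ]
    have := word_succ (insertMax i s q) (i.succAbove ⟨j, hjn⟩)
    rw [succAbove_eq, insertMax_fst_succAbove, insertMax_snd_succAbove] at this
    exact this.trans (word_succ q ⟨j, hjn⟩).symm
  · rw [word_eq_zero _ (by omega), word_eq_zero _ (by omega)]

lemma mem_ddes_insertMax_of_lt {j : ℕ} (hi : (i : ℕ) ≠ 1) (hj : j < i) :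
    j ∈ (insertMax i s q).ddes ↔ j ∈ q.ddes := by
  have bounds : j < n ∧ j < n + 1 := by omega
  rcases j with _ | j
  · simp [mem_ddes, bounds, word_insertMax_of_le i s q (show 1 ≤ (i : ℕ) by omega),
      word_insertMax_of_le i s q (show 2 ≤ (i : ℕ) by omega)]
  · simp [mem_ddes, bounds, word_insertMax_of_le i s q hj, word_insertMax_of_le i s q hj.le]

lemma succ_mem_ddes_insertMax_of_lt {j : ℕ} (hj : i < j) :
    j + 1 ∈ (insertMax i s q).ddes ↔ j ∈ q.ddes := by
  obtain ⟨j, rfl⟩ : ∃ a, j = a + 1 := ⟨j - 1, by omega⟩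
  simp [mem_ddes, word_insertMax_succ_of_lt i s q hj,
    word_insertMax_succ_of_lt i s q (hj.trans (Nat.lt_succ_self _))]

lemma mem_ddes_insertMax_self : (i : ℕ) ∈ (insertMax i s q).ddes ↔ s = true := by
  have lt_iff {a : ℤ} (ha : |a| ≤ n) : (if s then -1 else 1) * ((n : ℤ) + 1) < a ↔ s = true := by
    rw [abs_le] at ha
    cases s <;> simp <;> omega
  have word_self := word_insertMax_succ_self i s q
  rw [mem_ddes, and_iff_right i.isLt, entry_succ, word_self]
  rcases hi : (i : ℕ) with _ | j
  · rw [entry_zero, word_insertMax_succ_of_lt i s q (by omega)]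
    exact lt_iff (by simpa using abs_word_le q 1)
  · rw [entry_succ, word_insertMax_of_le i s q hi.ge]
    exact lt_iff (abs_word_le q _)

lemma succ_mem_ddes_insertMax_self (hi : (i : ℕ) < n) :
    (i : ℕ) + 1 ∈ (insertMax i s q).ddes ↔ s = false := by
  have ha := abs_le.1 (abs_word_le q (i + 1))
  rw [mem_ddes, and_iff_right (by omega), entry_succ, entry_succ, word_insertMax_succ_self,
    word_insertMax_succ_of_lt i s q (Nat.lt_succ_self _)]
  cases s <;> simp <;> omega

lemma d_insertMax_of_lt (hi : (i : ℕ) ≠ 1) (hin : (i : ℕ) < n) :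
    (insertMax i s q).d = #(q.ddes.erase i) + 1 := by
  rw [d, card_eq_card_erase_add_card_inter (fun _ ↦ mem_ddes_insertMax_of_lt i s q hi)
    (fun _ ↦ succ_mem_ddes_insertMax_of_lt i s q), add_right_inj, card_eq_one]
  have self := mem_ddes_insertMax_self i s q
  have succ_self := succ_mem_ddes_insertMax_self i s q hin
  refine ⟨if s then i else i + 1, ?_⟩
  ext j
  cases s <;> grind

lemma d_insertMax_last (hn : n ≠ 1) : (insertMax (Fin.last n) s q).d = q.d + s.toNat := by
  have self := mem_ddes_insertMax_self (Fin.last n) s q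
  have succ_notMem : n + 1 ∉ (insertMax (Fin.last n) s q).ddes := by simp [mem_ddes]
  have erase_eq : q.ddes.erase n = q.ddes := erase_eq_of_notMem (by simp [mem_ddes])
  have inter_eq : (insertMax (Fin.last n) s q).ddes ∩ {n, n + 1} = if s then {n} else ∅ := by
    ext j
    rw [Fin.val_last] at self
    cases s <;> grind
  rw [d, card_eq_card_erase_add_card_inter (i := n)
    (fun _ ↦ mem_ddes_insertMax_of_lt (Fin.last n) s q (by simpa))
    (fun _ ↦ succ_mem_ddes_insertMax_of_lt (Fin.last n) s q), erase_eq, inter_eq, d]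
  cases s <;> simp

lemma type1_insertMax_of_two_le (hi : 2 ≤ (i : ℕ)) : (insertMax i s q).type1 ↔ q.type1 := by
  rw [type1, mem_ddes_insertMax_of_lt i s q (by omega) (by omega),
    mem_ddes_insertMax_of_lt i s q (by omega) (by omega), type1]

lemma type1_insertMax_zero (hn : 0 < n) : (insertMax 0 s q).type1 ↔ s = false := by
  have zero_mem := mem_ddes_insertMax_self 0 s q
  have one_mem := succ_mem_ddes_insertMax_self 0 s q hn
  rw [Fin.val_zero] at zero_mem one_mem
  simp [type1, zero_mem, one_mem]

lemma not_type1_insertMax_of_eq_one (hi : (i : ℕ) = 1) : ¬ (insertMax i s q).type1 := by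
  have one_mem := mem_ddes_insertMax_self i s q
  have zero_mem : 0 ∈ (insertMax i s q).ddes ↔ s = true := by
    have word_two := word_insertMax_succ_self i s q
    rw [hi] at word_two
    have ha := abs_le.1 (abs_word_le q 1)
    rw [mem_ddes, and_iff_right (by omega), entry_zero, entry_succ, word_two, zero_add,
      word_insertMax_of_le i s q hi.ge]
    cases s <;> simp <;> omega
  rw [hi] at one_mem
  rw [type1, one_mem, zero_mem]
  exact and_not_self

end InsertMax

section Count

variable {n : ℕ} (q : SignedPerm (n + 2)) (k : ℤ)

lemma sum_type1_insertMax_zero :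
    (∑ s, if (insertMax 0 s q).type1 ∧ ((insertMax 0 s q).d : ℤ) = k then (1 : ℤ) else 0) =
      (if q.type1 ∧ (q.d : ℤ) = k - 1 then 1 else 0)
        + (if q.type01 ∧ (q.d : ℤ) = k then 1 else 0)
        + (if q.typeGe2 ∧ (q.d : ℤ) = k - 1 then 1 else 0)
        + (if q.type0Ge2 ∧ (q.d : ℤ) = k then 1 else 0) := by
  have d_zero (s : Bool) : (insertMax 0 s q).d = #(q.ddes.erase 0) + 1 :=
    d_insertMax_of_lt _ s q (by simp) (by simp)
  have card_erase := q.card_erase_ddes_add 0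
  simp only [Fintype.sum_bool, type1_insertMax_zero _ q (Nat.succ_pos _), d_zero]
  simp only [type1, type01, typeGe2, type0Ge2]
  grind

lemma sum_mem_ddes_of_type1 (hq : q.type1) :
    (∑ t : Fin n, if (t : ℕ) + 2 ∈ q.ddes then (1 : ℤ) else 0) = q.d - 1 := by
  have d_eq := q.d_eq_sum
  rw [Fin.sum_univ_succ, Fin.sum_univ_succ] at d_eq
  simp only [Fin.val_zero, Fin.val_succ, zero_add, hq.1, hq.2, if_true, if_false] at d_eq
  linarith

lemma sum_type1_insertMax_interior :
    (∑ t : Fin n, ∑ s, if (insertMax t.castSucc.succ.succ s q).type1 ∧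
        ((insertMax t.castSucc.succ.succ s q).d : ℤ) = k then (1 : ℤ) else 0) =
      2 * (k - 1) * (if q.type1 ∧ (q.d : ℤ) = k then 1 else 0)
        + 2 * (n + 2 - k) * (if q.type1 ∧ (q.d : ℤ) = k - 1 then 1 else 0) := by
  have d_interior (t : Fin n) (s : Bool) :
      (insertMax t.castSucc.succ.succ s q).d = #(q.ddes.erase (t + 2)) + 1 :=
    d_insertMax_of_lt _ s q (by simp) (by simp)
  have summand (t : Fin n) :
      (if q.type1 ∧ ((#(q.ddes.erase (t + 2)) + 1 : ℕ) : ℤ) = k then (1 : ℤ) else 0) =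
        (if (t : ℕ) + 2 ∈ q.ddes then 1 else 0) * (if q.type1 ∧ (q.d : ℤ) = k then 1 else 0)
          + (1 - if (t : ℕ) + 2 ∈ q.ddes then 1 else 0)
            * (if q.type1 ∧ (q.d : ℤ) = k - 1 then 1 else 0) := by
    have card_erase := q.card_erase_ddes_add (t + 2)
    grind
  simp only [Fintype.sum_bool, d_interior,
    type1_insertMax_of_two_le (Fin.succ (Fin.succ _)) _ q (by simp), summand]
  by_cases hq : q.type1
  · rw [sum_add_distrib, sum_add_distrib, ← sum_mul, ← sum_mul, sum_sub_distrib, sum_const,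
      card_univ, Fintype.card_fin, sum_mem_ddes_of_type1 q hq, nsmul_one]
    grind
  · simp [hq]

lemma sum_type1_insertMax_last :
    (∑ s, if (insertMax (Fin.last (n + 2)) s q).type1 ∧
        ((insertMax (Fin.last (n + 2)) s q).d : ℤ) = k then (1 : ℤ) else 0) =
      (if q.type1 ∧ (q.d : ℤ) = k then 1 else 0)
        + (if q.type1 ∧ (q.d : ℤ) = k - 1 then 1 else 0) := by
  simp only [Fintype.sum_bool, type1_insertMax_of_two_le (Fin.last (n + 2)) _ q (by simp),
    d_insertMax_last _ q (by omega), Bool.toNat_true, Bool.toNat_false]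
  grind

lemma sum_type1_insertMax :
    (∑ i, ∑ s, if (insertMax i s q).type1 ∧ ((insertMax i s q).d : ℤ) = k then (1 : ℤ) else 0) =
      (2 * k - 1) * (if q.type1 ∧ (q.d : ℤ) = k then 1 else 0)
        + 2 * ((n + 3 : ℤ) - k) * (if q.type1 ∧ (q.d : ℤ) = k - 1 then 1 else 0)
        + (if q.type01 ∧ (q.d : ℤ) = k then 1 else 0)
        + (if q.typeGe2 ∧ (q.d : ℤ) = k - 1 then 1 else 0)
        + (if q.type0Ge2 ∧ (q.d : ℤ) = k then 1 else 0) := by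
  have not_type1_one (s : Bool) : ¬ (insertMax (Fin.succ 0) s q).type1 :=
    not_type1_insertMax_of_eq_one _ s q (by simp)
  rw [Fin.sum_univ_succ, Fin.sum_univ_succ, Fin.sum_univ_castSucc, sum_type1_insertMax_zero,
    sum_type1_insertMax_interior, Fin.succ_last, Fin.succ_last, sum_type1_insertMax_last]
  simp only [not_type1_one, false_and, if_false, sum_const_zero]
  ring

end Count

end SignedPerm

/-- **Proposition 3.2 (i).** Recurrence for the sub-Eulerian numbers `D_{n,k}^1`. -/
theorem subEuler1_recurrence (n : ℕ) (hn : 3 ≤ n) (k : ℤ) :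
    (subEuler1 n k : ℤ) =
      (2 * k - 1) * subEuler1 (n - 1) k + 2 * ((n : ℤ) - k) * subEuler1 (n - 1) (k - 1)
        + subEuler01 (n - 1) k + subEulerGe2 (n - 1) (k - 1) + subEuler0Ge2 (n - 1) k := by
  obtain ⟨m, rfl⟩ : ∃ m, n = m + 3 := ⟨n - 3, by omega⟩
  have doubled := SignedPerm.two_mul_subEuler1 (n := m + 1) k
  rw [← SignedPerm.sum_insertMax] at doubled
  simp only [SignedPerm.sum_type1_insertMax, Finset.sum_add_distrib, ← Finset.mul_sum,
    ← SignedPerm.two_mul_subEuler1, ← SignedPerm.two_mul_subEuler01,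
    ← SignedPerm.two_mul_subEulerGe2, ← SignedPerm.two_mul_subEuler0Ge2] at doubled
  rw [show m + 3 - 1 = m + 2 from rfl]
  push_cast
  linarith
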